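/- arXiv:2509.03474 — 4 statements merged into one kernel-verified Lean document; each statement's English description precedes it below -/
import Mathlib

section
/- Let n, p ∈ ℕ. Let A : ℝ → Matrix (Fin n) (Fin n) ℝ, B : ℝ → Matrix (Fin n) (Fin p) ℝ, and v : ℝ → (Fin p → ℝ) be continuous on [0,1]. Let Φ : ℝ → Matrix (Fin n) (Fin n) ℝ satisfy Φ 0 = 1, Φ t invertible for every t ∈ [0,1], and Φ has derivative A t * Φ t at every t ∈ [0,1] within [0,1]. Suppose z : ℝ → (Fin n → ℝ) is continuous on [0,1] with z 0 = 0, and for every t ∈ [0,1] z has derivative A t *ᵥ z t + B t *ᵥ v t at t within [0,1]. Then for every t ∈ [0,1], z t = Φ t *ᵥ (∫ s in (0:ℝ)..t, (Φ s)⁻¹ *ᵥ (B s *ᵥ v s)). -/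
open scoped Matrix

attribute [local instance] Matrix.frobeniusNormedAddCommGroup Matrix.frobeniusNormedSpace

/-- Product rule for the matrix-vector product. -/
theorem HasDerivWithinAt.matrix_mulVec {m n : ℕ} {M : ℝ → Matrix (Fin m) (Fin n) ℝ}
    {M' : Matrix (Fin m) (Fin n) ℝ} {x : ℝ → Fin n → ℝ} {x' : Fin n → ℝ} {s : Set ℝ} {t : ℝ}
    (hM : HasDerivWithinAt M M' s t) (hx : HasDerivWithinAt x x' s t) :
    HasDerivWithinAt (fun r => M r *ᵥ x r) (M t *ᵥ x' + M' *ᵥ x t) s t := by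
  have hentry : ∀ i j, HasDerivWithinAt (fun r => M r i j) (M' i j) s t := fun i j =>
    (LinearMap.toContinuousLinearMap (Matrix.entryLinearMap ℝ ℝ i j)).hasFDerivAt
      |>.comp_hasDerivWithinAt t hM
  rw [hasDerivWithinAt_pi] at hx ⊢
  intro i
  have h := HasDerivWithinAt.fun_sum (u := Finset.univ)
    fun j _ => (hentry i j).fun_mul (hx j)
  have hval : (M t *ᵥ x' + M' *ᵥ x t) i = ∑ j, (M' i j * x t j + M t i j * x' j) := by
    rw [Finset.sum_add_distrib, add_comm]
    rfl
  rw [hval]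
  exact h

section MatrixInverse

attribute [local instance] Matrix.frobeniusNormedRing Matrix.frobeniusNormedAlgebra

/-- The derivative of the inverse of a differentiable family of matrices. -/
theorem HasDerivWithinAt.matrix_inv {n : ℕ} {M : ℝ → Matrix (Fin n) (Fin n) ℝ}
    {M' : Matrix (Fin n) (Fin n) ℝ} {s : Set ℝ} {t : ℝ}
    (hM : HasDerivWithinAt M M' s t) (hu : IsUnit (M t)) :
    HasDerivWithinAt (fun r => (M r)⁻¹) (-((M t)⁻¹ * M' * (M t)⁻¹)) s t := by
  have : CompleteSpace (Matrix (Fin n) (Fin n) ℝ) := FiniteDimensional.complete ℝ _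
  obtain ⟨u, hu⟩ := hu
  have h := hasFDerivAt_ringInverse (𝕜 := ℝ) u
  rw [hu] at h
  have hval : -((M t)⁻¹ * M' * (M t)⁻¹) =
      (-ContinuousLinearMap.mulLeftRight ℝ (Matrix (Fin n) (Fin n) ℝ) ↑u⁻¹ ↑u⁻¹) M' := by
    simp [← hu]
  rw [hval]
  simp only [Matrix.nonsing_inv_eq_ringInverse]
  exact h.comp_hasDerivWithinAt t hM

end MatrixInverse

theorem variation_of_constants_uniqueness
    (n p : ℕ)
    (A : ℝ → Matrix (Fin n) (Fin n) ℝ)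
    (B : ℝ → Matrix (Fin n) (Fin p) ℝ)
    (v : ℝ → (Fin p → ℝ))
    (hA : ContinuousOn A (Set.Icc (0:ℝ) 1))
    (hB : ContinuousOn B (Set.Icc (0:ℝ) 1))
    (hv : ContinuousOn v (Set.Icc (0:ℝ) 1))
    (Φ : ℝ → Matrix (Fin n) (Fin n) ℝ)
    (hΦ0 : Φ 0 = 1)
    (hinv : ∀ t ∈ Set.Icc (0:ℝ) 1, IsUnit (Φ t))
    (hΦ : ∀ t ∈ Set.Icc (0:ℝ) 1,
      HasDerivWithinAt Φ (A t * Φ t) (Set.Icc (0:ℝ) 1) t)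
    (z : ℝ → (Fin n → ℝ))
    (hzc : ContinuousOn z (Set.Icc (0:ℝ) 1))
    (hz0 : z 0 = 0)
    (hz : ∀ t ∈ Set.Icc (0:ℝ) 1,
      HasDerivWithinAt z (A t *ᵥ z t + B t *ᵥ v t) (Set.Icc (0:ℝ) 1) t) :
    ∀ t ∈ Set.Icc (0:ℝ) 1,
      z t = Φ t *ᵥ (∫ s in (0:ℝ)..t, (Φ s)⁻¹ *ᵥ (B s *ᵥ v s)) := by
  have hderiv : ∀ t ∈ Set.Icc (0:ℝ) 1, HasDerivWithinAt (fun s => (Φ s)⁻¹ *ᵥ z s)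
      ((Φ t)⁻¹ *ᵥ (B t *ᵥ v t)) (Set.Icc (0:ℝ) 1) t := by
    intro t ht
    have hdet := (Matrix.isUnit_iff_isUnit_det _).mp (hinv t ht)
    convert ((hΦ t ht).matrix_inv (hinv t ht)).matrix_mulVec (hz t ht) using 1
    rw [← mul_assoc, Matrix.mul_nonsing_inv_cancel_right _ _ hdet, Matrix.neg_mulVec,
      Matrix.mulVec_add, Matrix.mulVec_mulVec (z t)]
    abel
  have hinvc : ContinuousOn (fun s => (Φ s)⁻¹) (Set.Icc (0:ℝ) 1) := fun t ht =>
    ((hΦ t ht).matrix_inv (hinv t ht)).continuousWithinAt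
  have hmulVec : Continuous fun q : Matrix (Fin n) (Fin n) ℝ ×
      Matrix (Fin n) (Fin p) ℝ × (Fin p → ℝ) => q.1 *ᵥ (q.2.1 *ᵥ q.2.2) := by
    fun_prop
  have hcont : ContinuousOn (fun s => (Φ s)⁻¹ *ᵥ (B s *ᵥ v s)) (Set.Icc (0:ℝ) 1) :=
    hmulVec.comp_continuousOn (hinvc.prodMk (hB.prodMk hv))
  intro t ht
  have hsub : Set.Icc 0 t ⊆ Set.Icc (0:ℝ) 1 := Set.Icc_subset_Icc_right ht.2
  have hint := intervalIntegral.integral_eq_sub_of_hasDerivAt_of_le ht.1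
    (fun s hs => (hderiv s (hsub hs)).continuousWithinAt.mono hsub)
    (fun s hs => (hderiv s (hsub (Set.Ioo_subset_Icc_self hs))).hasDerivAt
      (Icc_mem_nhds hs.1 (hs.2.trans_le ht.2)))
    ((hcont.mono hsub).intervalIntegrable_of_Icc ht.1)
  rw [hint, hz0, Matrix.mulVec_zero, sub_zero, Matrix.mulVec_mulVec,
    Matrix.mul_nonsing_inv _ ((Matrix.isUnit_iff_isUnit_det _).mp (hinv t ht)), Matrix.one_mulVec]
end

section
/- Let n, p ∈ ℕ. Let M : ℝ → Matrix (Fin n) (Fin p) ℝ be continuous on [0,1], let W := ∫ s in (0:ℝ)..1, M s * (M s)ᵀ be invertible, and let C ∈ Matrix (Fin n) (Fin n) ℝ be invertible. Define T : C([0,1], Fin p → ℝ) → (Fin n → ℝ) by T v = C *ᵥ (∫ s in (0:ℝ)..1, M s *ᵥ v s). Then T is a continuous linear map, the map η : (Fin n → ℝ) → C([0,1], Fin p → ℝ) sending z to the function s ↦ (M s)ᵀ *ᵥ (W⁻¹ *ᵥ (C⁻¹ *ᵥ z)) is a continuous linear map, T ∘ η = id, and consequently T is surjective. -/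
open scoped Matrix

attribute [local instance] Matrix.frobeniusNormedAddCommGroup Matrix.frobeniusNormedSpace

/-- The integral of a continuous family of matrices, applied to a fixed vector. -/
theorem intervalIntegral_mulVec_const {m k : Type*} [Fintype m] [Fintype k]
    {A : ℝ → Matrix m k ℝ} (hA : Continuous A) (a b : ℝ) (w : k → ℝ) :
    ∫ s in a..b, A s *ᵥ w = (∫ s in a..b, A s) *ᵥ w :=
  ContinuousLinearMap.intervalIntegral_comp_comm
    (LinearMap.toContinuousLinearMap ((Matrix.mulVecBilin ℝ ℝ).flip w))
    (hA.intervalIntegrable a b)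

/-- Integration over `[0, 1]` against a continuous matrix kernel, followed by a matrix, as a
continuous linear map on the space of continuous controls. -/
theorem exists_clm_mulVec_intervalIntegral {l m k : Type*} [Fintype l] [Fintype m] [Fintype k]
    {N : ℝ → Matrix m k ℝ} (hN : Continuous N) (C : Matrix l m ℝ) :
    ∃ T : C(Set.Icc (0:ℝ) 1, k → ℝ) →L[ℝ] (l → ℝ),
      ∀ v, T v = C *ᵥ (∫ s in (0:ℝ)..1, N s *ᵥ v (Set.projIcc 0 1 zero_le_one s)) := by
  have hjoint : Continuous fun q : C(Set.Icc (0:ℝ) 1, k → ℝ) × ℝ ↦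
      N q.2 *ᵥ q.1 (Set.projIcc 0 1 zero_le_one q.2) :=
    (hN.comp continuous_snd).matrix_mulVec
      (continuous_fst.eval (continuous_projIcc.comp continuous_snd))
  have hint (v : C(Set.Icc (0:ℝ) 1, k → ℝ)) : IntervalIntegrable
      (fun s ↦ N s *ᵥ v (Set.projIcc 0 1 zero_le_one s)) MeasureTheory.volume 0 1 :=
    (hjoint.comp (Continuous.prodMk_right v)).intervalIntegrable 0 1
  refine ⟨⟨⟨⟨fun v ↦ C *ᵥ (∫ s in (0:ℝ)..1, N s *ᵥ v (Set.projIcc 0 1 zero_le_one s)),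
    fun v w ↦ ?_⟩, fun c v ↦ ?_⟩, ?_⟩, fun v ↦ rfl⟩
  · simp only [ContinuousMap.add_apply, Matrix.mulVec_add]
    rw [intervalIntegral.integral_add (hint v) (hint w), Matrix.mulVec_add]
  · simp only [ContinuousMap.smul_apply, Matrix.mulVec_smul, RingHom.id_apply]
    rw [intervalIntegral.integral_smul, Matrix.mulVec_smul]
  · exact continuous_const.matrix_mulVec
      (intervalIntegral.continuous_parametric_intervalIntegral_of_continuous' hjoint 0 1)

/-- A continuous family of matrices sends vectors to continuous functions, continuously. -/
theorem exists_clm_mulVec_continuousMap {X k m : Type*} [TopologicalSpace X] [CompactSpace X]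
    [Fintype k] [Fintype m] {A : X → Matrix k m ℝ} (hA : Continuous A) :
    ∃ η : (m → ℝ) →L[ℝ] C(X, k → ℝ), ∀ z x, η z x = A x *ᵥ z :=
  ⟨LinearMap.toContinuousLinearMap
    { toFun := fun z ↦ ⟨fun x ↦ A x *ᵥ z, hA.matrix_mulVec continuous_const⟩
      map_add' := fun z w ↦ by ext1 x; exact Matrix.mulVec_add _ _ _
      map_smul' := fun c z ↦ by ext1 x; exact Matrix.mulVec_smul _ _ _ }, fun _ _ ↦ rfl⟩

theorem endpoint_map_submersion
    (n p : ℕ)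
    (M : ℝ → Matrix (Fin n) (Fin p) ℝ)
    (hM : ContinuousOn M (Set.Icc (0:ℝ) 1))
    (W : Matrix (Fin n) (Fin n) ℝ)
    (hW : W = ∫ s in (0:ℝ)..1, M s * (M s)ᵀ)
    (hWinv : IsUnit W)
    (C : Matrix (Fin n) (Fin n) ℝ)
    (hCinv : IsUnit C) :
    ∃ T : C(Set.Icc (0:ℝ) 1, Fin p → ℝ) →L[ℝ] (Fin n → ℝ),
      (∀ v, T v = C *ᵥ (∫ s in (0:ℝ)..1, M s *ᵥ v (Set.projIcc 0 1 zero_le_one s))) ∧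
      ∃ η : (Fin n → ℝ) →L[ℝ] C(Set.Icc (0:ℝ) 1, Fin p → ℝ),
        (∀ (z : Fin n → ℝ) (s : Set.Icc (0:ℝ) 1),
          η z s = (M s)ᵀ *ᵥ (W⁻¹ *ᵥ (C⁻¹ *ᵥ z))) ∧
        T.comp η = ContinuousLinearMap.id ℝ (Fin n → ℝ) ∧
        Function.Surjective T := by
  have hM' : Continuous fun s : Set.Icc (0:ℝ) 1 ↦ M s :=
    continuousOn_iff_continuous_domRestrict.mp hM
  set N : ℝ → Matrix (Fin n) (Fin p) ℝ := fun s ↦ M (Set.projIcc 0 1 zero_le_one s)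
  have hN : Continuous N := hM'.comp continuous_projIcc
  have hNM : ∀ s ∈ Set.uIcc (0:ℝ) 1, N s = M s := fun s hs ↦ by
    rw [Set.uIcc_of_le zero_le_one] at hs
    simp only [N, Set.projIcc_of_mem zero_le_one hs]
  have hWN : W = ∫ s in (0:ℝ)..1, N s * (N s)ᵀ := by
    rw [hW]
    exact intervalIntegral.integral_congr fun s hs ↦ by simp only [hNM s hs]
  obtain ⟨T, hT⟩ := exists_clm_mulVec_intervalIntegral hN C
  obtain ⟨η, hη⟩ := exists_clm_mulVec_continuousMap
    (hM'.matrix_transpose.matrix_mul (continuous_const (y := W⁻¹ * C⁻¹)))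
  have hη' (z : Fin n → ℝ) (s : Set.Icc (0:ℝ) 1) :
      η z s = (M s)ᵀ *ᵥ (W⁻¹ *ᵥ (C⁻¹ *ᵥ z)) := by
    rw [hη, Matrix.mulVec_mulVec, Matrix.mulVec_mulVec, Matrix.mul_assoc]
  have hTη (z : Fin n → ℝ) : T (η z) = z := by
    have hint : ∫ s in (0:ℝ)..1, N s *ᵥ η z (Set.projIcc 0 1 zero_le_one s) =
        W *ᵥ (W⁻¹ *ᵥ (C⁻¹ *ᵥ z)) := by
      rw [hWN, ← intervalIntegral_mulVec_const (hN.matrix_mul hN.matrix_transpose), ← hWN]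
      simp only [hη', N, Matrix.mulVec_mulVec, Matrix.mul_assoc]
    rw [hT, hint, Matrix.mulVec_mulVec _ W,
      Matrix.mul_nonsing_inv _ ((Matrix.isUnit_iff_isUnit_det _).mp hWinv), Matrix.one_mulVec,
      Matrix.mulVec_mulVec, Matrix.mul_nonsing_inv _ ((Matrix.isUnit_iff_isUnit_det _).mp hCinv),
      Matrix.one_mulVec]
  refine ⟨T, fun v ↦ ?_, η, hη', ContinuousLinearMap.ext hTη, fun z ↦ ⟨η z, hTη z⟩⟩
  rw [hT]
  congr 1
  exact intervalIntegral.integral_congr fun s hs ↦ by simp only [hNM s hs]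
end

section
/- Let n, p ∈ ℕ and let M : ℝ → Matrix (Fin n) (Fin p) ℝ be continuous on [0,1]. Suppose that for every s ∈ [0,1] the matrix M s has full row rank, i.e., the linear map z ↦ (M s)ᵀ *ᵥ z is injective. Then the Gramian W := ∫ s in (0:ℝ)..1, M s * (M s)ᵀ is positive definite, and in particular invertible. -/
open scoped Matrix

attribute [local instance] Matrix.frobeniusNormedAddCommGroup Matrix.frobeniusNormedSpace

theorem Matrix.posDef_mul_transpose_self {n p : ℕ} {A : Matrix (Fin n) (Fin p) ℝ}
    (hA : Function.Injective fun z : Fin n → ℝ => Aᵀ *ᵥ z) : (A * Aᵀ).PosDef := by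
  rw [← Matrix.conjTranspose_eq_transpose_of_trivial]
  refine Matrix.PosDef.mul_conjTranspose_self A fun x y hxy => hA ?_
  simpa only [Matrix.mulVec_transpose] using hxy

/-- The integral of a continuous family of positive definite matrices is positive definite. -/
theorem Matrix.posDef_intervalIntegral {n : ℕ} {a b : ℝ} (hab : a < b)
    {A : ℝ → Matrix (Fin n) (Fin n) ℝ} (hA : ContinuousOn A (Set.Icc a b))
    (hpos : ∀ s ∈ Set.Icc a b, (A s).PosDef) : (∫ s in a..b, A s).PosDef := by
  have hint := ContinuousOn.intervalIntegrable_of_Icc (μ := MeasureTheory.volume) hab.le hA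
  have apply_integral (L : Matrix (Fin n) (Fin n) ℝ →ₗ[ℝ] ℝ) :
      L (∫ s in a..b, A s) = ∫ s in a..b, L (A s) :=
    (L.toContinuousLinearMap.intervalIntegral_comp_comm hint).symm
  refine Matrix.PosDef.of_dotProduct_mulVec_pos ?_ fun x hx => ?_
  · ext i j
    have entry (i j : Fin n) : (∫ s in a..b, A s) i j = ∫ s in a..b, A s i j :=
      apply_integral (Matrix.entryLinearMap ℝ ℝ i j)
    rw [Matrix.conjTranspose_apply, star_trivial, entry, entry]
    refine intervalIntegral.integral_congr fun s hs => ?_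
    rw [Set.uIcc_of_le hab.le] at hs
    simpa using (hpos s hs).isHermitian.apply i j
  · let L : Matrix (Fin n) (Fin n) ℝ →ₗ[ℝ] ℝ :=
      { toFun := fun B => star x ⬝ᵥ (B *ᵥ x)
        map_add' := fun B C => by rw [Matrix.add_mulVec, dotProduct_add]
        map_smul' := fun c B => by rw [Matrix.smul_mulVec, dotProduct_smul, RingHom.id_apply] }
    change 0 < L (∫ s in a..b, A s)
    rw [apply_integral]
    have hL (s : ℝ) (hs : s ∈ Set.Icc a b) : 0 < L (A s) := (hpos s hs).dotProduct_mulVec_pos hx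
    exact intervalIntegral.integral_pos hab
      (L.toContinuousLinearMap.continuous.comp_continuousOn hA)
      (fun s hs => (hL s (Set.Ioc_subset_Icc_self hs)).le)
      ⟨a, Set.left_mem_Icc.2 hab.le, hL a (Set.left_mem_Icc.2 hab.le)⟩

theorem gramian_posdef_of_full_row_rank
    (n p : ℕ)
    (M : ℝ → Matrix (Fin n) (Fin p) ℝ)
    (hM : ContinuousOn M (Set.Icc (0:ℝ) 1))
    (hrank : ∀ s ∈ Set.Icc (0:ℝ) 1,
      Function.Injective (fun z : Fin n → ℝ => (M s)ᵀ *ᵥ z)) :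
    (∫ s in (0:ℝ)..1, M s * (M s)ᵀ).PosDef ∧
    IsUnit (∫ s in (0:ℝ)..1, M s * (M s)ᵀ) := by
  have hcont : ContinuousOn (fun s => M s * (M s)ᵀ) (Set.Icc (0:ℝ) 1) :=
    (continuous_id.matrix_mul continuous_id.matrix_transpose).comp_continuousOn hM
  have hW := Matrix.posDef_intervalIntegral zero_lt_one hcont
    fun s hs => Matrix.posDef_mul_transpose_self (hrank s hs)
  exact ⟨hW, hW.isUnit⟩
end

section
/- Let n, p, n₀ ∈ ℕ. Let M : ℝ → Matrix (Fin n) (Fin p) ℝ be continuous on [0,1] with invertible Gramian W := ∫ s in (0:ℝ)..1, M s * (M s)ᵀ, let C ∈ Matrix (Fin n) (Fin n) ℝ be invertible, and define the continuous linear map T : C([0,1], Fin p → ℝ) →L[ℝ] (Fin n → ℝ) by T v = C *ᵥ (∫ s in (0:ℝ)..1, M s *ᵥ v s). Let R : (Fin n → ℝ) →ₗ[ℝ] (Fin n₀ → ℝ) be a surjective linear map. Then the kernel of R ∘ T is a closed subspace of C([0,1], Fin p → ℝ), and the quotient C([0,1], Fin p → ℝ) ⧸ ker(R ∘ T) is finite-dimensional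 of dimension n₀ (Module.finrank ℝ of the quotient equals n₀). -/
open scoped Matrix

attribute [local instance] Matrix.frobeniusNormedAddCommGroup Matrix.frobeniusNormedSpace

/-- Integrating the Gramian integrand commutes with applying it to a fixed vector. -/
theorem intervalIntegral_gramian_mulVec {n p : ℕ} {M : ℝ → Matrix (Fin n) (Fin p) ℝ}
    (hM : ContinuousOn M (Set.Icc (0:ℝ) 1)) (w : Fin n → ℝ) :
    ∫ s in (0:ℝ)..1, M s *ᵥ ((M s)ᵀ *ᵥ w) = (∫ s in (0:ℝ)..1, M s * (M s)ᵀ) *ᵥ w := by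
  have hcont : ContinuousOn (fun s => M s * (M s)ᵀ) (Set.uIcc (0:ℝ) 1) := by
    rw [Set.uIcc_of_le zero_le_one]
    have hmul : Continuous fun A : Matrix (Fin n) (Fin p) ℝ => A * Aᵀ := by fun_prop
    exact hmul.comp_continuousOn hM
  have : CompleteSpace (Matrix (Fin n) (Fin n) ℝ) := FiniteDimensional.complete ℝ _
  let L : Matrix (Fin n) (Fin n) ℝ →L[ℝ] (Fin n → ℝ) :=
    LinearMap.toContinuousLinearMap ((Matrix.mulVecBilin ℝ ℝ).flip w)
  have h := L.intervalIntegral_comp_comm (hcont.intervalIntegrable (μ := MeasureTheory.volume))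
  simp only [Matrix.mulVec_mulVec]
  exact h

/-- If the Gramian of `M` is invertible, every vector is reached by a continuous control. -/
theorem exists_continuousMap_integral_mulVec_eq {n p : ℕ} {M : ℝ → Matrix (Fin n) (Fin p) ℝ}
    (hM : ContinuousOn M (Set.Icc (0:ℝ) 1))
    (hW : IsUnit (∫ s in (0:ℝ)..1, M s * (M s)ᵀ)) (x : Fin n → ℝ) :
    ∃ v : C(Set.Icc (0:ℝ) 1, Fin p → ℝ),
      ∫ s in (0:ℝ)..1, M s *ᵥ v (Set.projIcc 0 1 zero_le_one s) = x := by
  obtain ⟨w, hw⟩ := Matrix.mulVec_surjective_iff_isUnit.2 hW x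
  have hv : Continuous fun A : Matrix (Fin n) (Fin p) ℝ => Aᵀ *ᵥ w := by fun_prop
  refine ⟨⟨fun s => (M s)ᵀ *ᵥ w, hv.comp (continuousOn_iff_continuous_domRestrict.1 hM)⟩, ?_⟩
  rw [← hw, ← intervalIntegral_gramian_mulVec hM w]
  refine intervalIntegral.integral_congr fun s hs => ?_
  rw [Set.uIcc_of_le zero_le_one] at hs
  simp [Set.projIcc_of_mem zero_le_one hs]

theorem kernel_of_readout_endpoint_differential
    (n p n₀ : ℕ)
    (M : ℝ → Matrix (Fin n) (Fin p) ℝ)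
    (hM : ContinuousOn M (Set.Icc (0:ℝ) 1))
    (hWinv : IsUnit (∫ s in (0:ℝ)..1, M s * (M s)ᵀ))
    (C : Matrix (Fin n) (Fin n) ℝ)
    (hCinv : IsUnit C)
    (T : C(Set.Icc (0:ℝ) 1, Fin p → ℝ) →L[ℝ] (Fin n → ℝ))
    (hT : ∀ v, T v = C *ᵥ (∫ s in (0:ℝ)..1, M s *ᵥ v (Set.projIcc 0 1 zero_le_one s)))
    (R : (Fin n → ℝ) →ₗ[ℝ] (Fin n₀ → ℝ))
    (hR : Function.Surjective R) :
    IsClosed ((LinearMap.ker (R ∘ₗ (T : C(Set.Icc (0:ℝ) 1, Fin p → ℝ) →ₗ[ℝ] (Fin n → ℝ)))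
        : Submodule ℝ C(Set.Icc (0:ℝ) 1, Fin p → ℝ)) : Set C(Set.Icc (0:ℝ) 1, Fin p → ℝ)) ∧
    FiniteDimensional ℝ
      (C(Set.Icc (0:ℝ) 1, Fin p → ℝ) ⧸
        LinearMap.ker (R ∘ₗ (T : C(Set.Icc (0:ℝ) 1, Fin p → ℝ) →ₗ[ℝ] (Fin n → ℝ)))) ∧
    Module.finrank ℝ
      (C(Set.Icc (0:ℝ) 1, Fin p → ℝ) ⧸
        LinearMap.ker (R ∘ₗ (T : C(Set.Icc (0:ℝ) 1, Fin p → ℝ) →ₗ[ℝ] (Fin n → ℝ)))) = n₀ := by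
  have hTsurj : Function.Surjective T := fun y => by
    obtain ⟨x, hx⟩ := Matrix.mulVec_surjective_iff_isUnit.2 hCinv y
    obtain ⟨v, hv⟩ := exists_continuousMap_integral_mulVec_eq hM hWinv x
    exact ⟨v, by rw [hT, hv, hx]⟩
  have hsurj : Function.Surjective
      (R ∘ₗ (T : C(Set.Icc (0:ℝ) 1, Fin p → ℝ) →ₗ[ℝ] (Fin n → ℝ))) :=
    hR.comp hTsurj
  have e := LinearMap.quotKerEquivOfSurjective _ hsurj
  refine ⟨?_, e.symm.finiteDimensional, ?_⟩
  · exact (LinearMap.toContinuousLinearMap R ∘L T).isClosed_ker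
  · rw [e.finrank_eq, Module.finrank_fin_fun]
end
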